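/- arXiv:1911.06398 — 3 statements merged into one kernel-verified Lean document; each statement's English description precedes it below -/
import Mathlib

section
/- Let G be a simple graph on an odd number n of vertices whose Laplacian matrix L(G) has simple spectrum. Then the number of unordered pairs {u,v} of twin vertices of G is at most (n − 1)/2. -/
open Classical Matrix

noncomputable def lap {n : ℕ} (G : SimpleGraph (Fin n)) : Matrix (Fin n) (Fin n) ℝ :=
  Matrix.of fun i j =>
    (if i = j then ((G.neighborSet i).ncard : ℝ) else 0) - (if G.Adj i j then 1 else 0)

def IsTwin {n : ℕ} (G : SimpleGraph (Fin n)) (u v : Fin n) : Prop :=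
  u ≠ v ∧ G.neighborSet u \ {v} = G.neighborSet v \ {u}

def IsEigenvalue {n : ℕ} (M : Matrix (Fin n) (Fin n) ℝ) (μ : ℝ) : Prop :=
  ∃ x : Fin n → ℝ, x ≠ 0 ∧ M.mulVec x = μ • x

def HasSimpleSpectrum {n : ℕ} (M : Matrix (Fin n) (Fin n) ℝ) : Prop :=
  ∃ μ : Fin n → ℝ, Function.Injective μ ∧ ∀ i, IsEigenvalue M (μ i)

def Controllable {n : ℕ} (M : Matrix (Fin n) (Fin n) ℝ) (b : Fin n → ℝ) : Prop :=
  Submodule.span ℝ (Set.range fun k : Fin n => (M ^ (k : ℕ)).mulVec b) = ⊤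

def StronglyUncontrollable {n : ℕ} (G : SimpleGraph (Fin n)) : Prop :=
  G.Connected ∧ HasSimpleSpectrum (lap G) ∧
    ∀ b : Fin n → ℝ, (∀ i, b i = 0 ∨ b i = 1) → ¬ Controllable (lap G) b

def Pmat {n k : ℕ} (c : Fin n → Fin k) : Matrix (Fin n) (Fin k) ℝ :=
  Matrix.of fun i j => if c i = j then 1 else 0

def IsAEP {n k : ℕ} (G : SimpleGraph (Fin n)) (c : Fin n → Fin k) : Prop :=
  ∀ i j : Fin k, i ≠ j → ∀ x y : Fin n, c x = i → c y = i →
    (G.neighborSet x ∩ {z | c z = j}).ncard = (G.neighborSet y ∩ {z | c z = j}).ncard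

noncomputable def quotLap {n k : ℕ} (G : SimpleGraph (Fin n)) (c : Fin n → Fin k) :
    Matrix (Fin k) (Fin k) ℝ :=
  ((Pmat c)ᵀ * Pmat c)⁻¹ * (Pmat c)ᵀ * lap G * Pmat c

def IsQuotAEP {k m : ℕ} (Lq : Matrix (Fin k) (Fin k) ℝ) (r : Fin k → Fin m) : Prop :=
  ∀ a b : Fin m, a ≠ b → ∀ C C' : Fin k, r C = a → r C' = a →
    ∑ C'' ∈ Finset.univ.filter (fun C'' => r C'' = b), Lq C C'' =
      ∑ C'' ∈ Finset.univ.filter (fun C'' => r C'' = b), Lq C' C''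

def IsGraphAut {n : ℕ} (G : SimpleGraph (Fin n)) (σ : Equiv.Perm (Fin n)) : Prop :=
  ∀ x y, G.Adj x y ↔ G.Adj (σ x) (σ y)

def joinOne {n : ℕ} (G : SimpleGraph (Fin n)) : SimpleGraph (Fin (n + 1)) where
  Adj x y := x ≠ y ∧ ((x : ℕ) = n ∨ (y : ℕ) = n ∨
    ∃ (hx : (x : ℕ) < n) (hy : (y : ℕ) < n), G.Adj ⟨x, hx⟩ ⟨y, hy⟩)
  symm := by
    constructor
    rintro x y ⟨hxy, h⟩
    refine ⟨hxy.symm, ?_⟩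
    rcases h with h | h | ⟨hx, hy, h⟩
    exacts [Or.inr (Or.inl h), Or.inl h, Or.inr (Or.inr ⟨hy, hx, h.symm⟩)]
  loopless := ⟨fun x h => h.1 rfl⟩

def joinTwo {n : ℕ} (G : SimpleGraph (Fin n)) : SimpleGraph (Fin (n + 2)) where
  Adj x y := x ≠ y ∧ (((x : ℕ) < n ∧ n ≤ (y : ℕ)) ∨ ((y : ℕ) < n ∧ n ≤ (x : ℕ)) ∨
    ∃ (hx : (x : ℕ) < n) (hy : (y : ℕ) < n), G.Adj ⟨x, hx⟩ ⟨y, hy⟩)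
  symm := by
    constructor
    rintro x y ⟨hxy, h⟩
    refine ⟨hxy.symm, ?_⟩
    rcases h with h | h | ⟨hx, hy, h⟩
    exacts [Or.inr (Or.inl h), Or.inl h, Or.inr (Or.inr ⟨hy, hx, h.symm⟩)]
  loopless := ⟨fun x h => h.1 rfl⟩

def addPendant {n : ℕ} (G : SimpleGraph (Fin n)) (v : Fin n) : SimpleGraph (Fin (n + 1)) where
  Adj x y := ((x : ℕ) = n ∧ (y : ℕ) = (v : ℕ)) ∨ ((y : ℕ) = n ∧ (x : ℕ) = (v : ℕ)) ∨
    ∃ (hx : (x : ℕ) < n) (hy : (y : ℕ) < n), G.Adj ⟨x, hx⟩ ⟨y, hy⟩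
  symm := by
    constructor
    rintro x y (h | h | ⟨hx, hy, h⟩)
    exacts [Or.inr (Or.inl h), Or.inl h, Or.inr (Or.inr ⟨hy, hx, h.symm⟩)]
  loopless := by
    constructor
    intro x h
    have hv := v.isLt
    rcases h with ⟨h1, h2⟩ | ⟨h1, h2⟩ | ⟨hx, hy, h⟩
    · omega
    · omega
    · exact G.loopless.irrefl _ h

/-!
Let `M` have simple spectrum. In a basis of eigenvectors of `M`, every matrix commuting with `M` is
diagonal, so any two such matrices commute with each other. In particular the permutations that
leave `M` invariant commute. Exchanging two twins is an automorphism of the graph, and the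
transpositions `(u v)` and `(u w)` do not commute when `v ≠ w`; hence a vertex has at most one twin,
and the twin pairs are disjoint.
-/

section Eigenbasis

variable {ι R V : Type*} [CommSemiring R] [AddCommMonoid V] [Module R V]
  {b : Module.Basis ι R V} {f g h : Module.End R V} {μ : ι → R}

lemma repr_apply_of_eigenbasis (hf : ∀ i, f (b i) = μ i • b i) (v : V) (j : ι) :
    b.repr (f v) j = μ j * b.repr v j := by
  have hcoord : b.coord j ∘ₗ f = μ j • b.coord j := b.ext fun i => by
    by_cases hij : i = j
    · simp [hf, hij]
    · simp [hf, hij]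
  exact LinearMap.congr_fun hcoord v

lemma exists_apply_eq_smul_of_commute [IsCancelMulZero R] (hμ : Function.Injective μ)
    (hf : ∀ i, f (b i) = μ i • b i) (hg : Commute f g) (i : ι) : ∃ c : R, g (b i) = c • b i := by
  have hfg : f (g (b i)) = μ i • g (b i) := by
    rw [← Module.End.mul_apply, hg.eq, Module.End.mul_apply, hf, map_smul]
  have hrepr (j : ι) (hij : i ≠ j) : b.repr (g (b i)) j = 0 := by
    have hj : μ j * b.repr (g (b i)) j = μ i * b.repr (g (b i)) j := by
      rw [← repr_apply_of_eigenbasis hf, hfg, map_smul, Finsupp.smul_apply, smul_eq_mul]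
    exact (mul_eq_mul_right_iff.1 hj).resolve_left (hμ.ne hij.symm)
  refine ⟨b.repr (g (b i)) i, b.repr.injective (Finsupp.ext fun j => ?_)⟩
  by_cases hij : i = j
  · simp [hij]
  · simp [hij, hrepr j hij]

lemma commute_of_commute_of_eigenbasis [IsCancelMulZero R] (hμ : Function.Injective μ)
    (hf : ∀ i, f (b i) = μ i • b i) (hg : Commute f g) (hh : Commute f h) : Commute g h := by
  refine b.ext fun i => ?_
  obtain ⟨c, hc⟩ := exists_apply_eq_smul_of_commute hμ hf hg i
  obtain ⟨d, hd⟩ := exists_apply_eq_smul_of_commute hμ hf hh i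
  simp only [Module.End.mul_apply, hc, hd, map_smul, smul_comm c d]

end Eigenbasis

lemma exists_eigenbasis_of_card_eq_finrank {ι K V : Type*} [Fintype ι] [Field K]
    [AddCommGroup V] [Module K V] [FiniteDimensional K V] {f : Module.End K V} {μ : ι → K}
    (hμ : Function.Injective μ) (hf : ∀ i, f.HasEigenvalue (μ i))
    (hcard : Fintype.card ι = Module.finrank K V) :
    ∃ b : Module.Basis ι K V, ∀ i, f (b i) = μ i • b i := by
  choose x hx using fun i => (hf i).exists_hasEigenvector
  have hli := Module.End.eigenvectors_linearIndependent' f μ hμ x hx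
  refine ⟨basisOfLinearIndependentOfCardEqFinrank' x hli hcard, fun i => ?_⟩
  rw [coe_basisOfLinearIndependentOfCardEqFinrank']
  exact (hx i).apply_eq_smul

lemma commute_permMatrix_of_submatrix_eq {m R : Type*} [Fintype m] [DecidableEq m]
    [NonAssocSemiring R] {M : Matrix m m R} {σ : Equiv.Perm m} (hσ : M.submatrix σ σ = M) :
    Commute M (σ.permMatrix R) := by
  rw [Commute, SemiconjBy, PEquiv.mul_toMatrix_toPEquiv, PEquiv.toMatrix_toPEquiv_mul]
  conv_lhs => rw [← hσ]
  simp

lemma commute_of_commute_permMatrix {m R : Type*} [Fintype m] [DecidableEq m]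
    [NonAssocSemiring R] [Nontrivial R] {σ τ : Equiv.Perm m}
    (h : Commute (σ.permMatrix R) (τ.permMatrix R)) :
    Commute σ τ := by
  rw [Commute, SemiconjBy, ← Matrix.permMatrix_mul, ← Matrix.permMatrix_mul] at h
  have hτσ : (τ * σ).toPEquiv = (σ * τ).toPEquiv := PEquiv.toMatrix_injective h
  exact Equiv.ext fun i => Option.some_injective _ (DFunLike.congr_fun hτσ.symm i)

lemma eq_of_commute_swap_swap {α : Type*} [DecidableEq α] {u v w : α} (huv : u ≠ v) (huw : u ≠ w)
    (h : Commute (Equiv.swap u v) (Equiv.swap u w)) : v = w := by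
  by_contra hvw
  have hu := Equiv.congr_fun h.eq u
  simp only [Equiv.Perm.mul_apply, Equiv.swap_apply_left] at hu
  rw [Equiv.swap_apply_of_ne_of_ne huw.symm (Ne.symm hvw),
    Equiv.swap_apply_of_ne_of_ne huv.symm hvw] at hu
  exact hvw hu.symm

lemma two_mul_ncard_setOf_lt_and_le_card {α : Type*} [Fintype α] [LinearOrder α]
    {r : α → α → Prop} [Std.Symm r] (hr : Relator.RightUnique r) :
    2 * {p : α × α | p.1 < p.2 ∧ r p.1 p.2}.ncard ≤ Fintype.card α := by
  set S := {p : α × α | p.1 < p.2 ∧ r p.1 p.2}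
  have hfst : Set.InjOn Prod.fst S := by
    rintro ⟨a, b⟩ ⟨-, hab⟩ ⟨_, c⟩ ⟨-, hac⟩ rfl
    exact Prod.ext rfl (hr hab hac)
  have hsnd : Set.InjOn Prod.snd S := by
    rintro ⟨a, b⟩ ⟨-, hab⟩ ⟨c, _⟩ ⟨-, hcb⟩ rfl
    exact Prod.ext (hr (symm hab) (symm hcb)) rfl
  have hdisj : Disjoint (Prod.fst '' S) (Prod.snd '' S) := by
    rw [Set.disjoint_left]
    rintro _ ⟨⟨a, b⟩, ⟨hab, hrab⟩, rfl⟩ ⟨⟨c, _⟩, ⟨hca, hrca⟩, rfl⟩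
    exact (hab.trans_eq (hr hrab (symm hrca))).asymm hca
  calc 2 * S.ncard = (Prod.fst '' S).ncard + (Prod.snd '' S).ncard := by
        rw [hfst.ncard_image, hsnd.ncard_image, two_mul]
    _ = (Prod.fst '' S ∪ Prod.snd '' S).ncard := (Set.ncard_union_eq hdisj).symm
    _ ≤ Fintype.card α := by simpa using Set.ncard_le_card (Prod.fst '' S ∪ Prod.snd '' S)

section Graph

variable {n : ℕ} {G : SimpleGraph (Fin n)} {M : Matrix (Fin n) (Fin n) ℝ} {u v w : Fin n}

lemma IsEigenvalue.hasEigenvalue_toLin' {μ : ℝ} (h : IsEigenvalue M μ) :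
    Module.End.HasEigenvalue (Matrix.toLin' M) μ := by
  obtain ⟨x, hx, hMx⟩ := h
  exact Module.End.hasEigenvalue_of_hasEigenvector
    ⟨Module.End.mem_eigenspace_iff.2 (by rw [Matrix.toLin'_apply, hMx]), hx⟩

lemma HasSimpleSpectrum.commute_of_commute {A B : Matrix (Fin n) (Fin n) ℝ}
    (hM : HasSimpleSpectrum M) (hA : Commute M A) (hB : Commute M B) : Commute A B := by
  obtain ⟨μ, hμ, hMμ⟩ := hM
  obtain ⟨b, hb⟩ := exists_eigenbasis_of_card_eq_finrank hμ
    (fun i => (hMμ i).hasEigenvalue_toLin') (Module.finrank_fintype_fun_eq_card ℝ).symm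
  have hAB := commute_of_commute_of_eigenbasis hμ hb
    (hA.map Matrix.toLinAlgEquiv') (hB.map Matrix.toLinAlgEquiv')
  exact hAB.of_map Matrix.toLinAlgEquiv'.injective

lemma HasSimpleSpectrum.commute_of_submatrix_eq (hM : HasSimpleSpectrum M)
    {σ τ : Equiv.Perm (Fin n)} (hσ : M.submatrix σ σ = M) (hτ : M.submatrix τ τ = M) :
    Commute σ τ :=
  commute_of_commute_permMatrix <| hM.commute_of_commute
    (commute_permMatrix_of_submatrix_eq hσ) (commute_permMatrix_of_submatrix_eq hτ)

lemma IsGraphAut.submatrix_lap {σ : Equiv.Perm (Fin n)} (hσ : IsGraphAut G σ) :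
    (lap G).submatrix σ σ = lap G := by
  have hdeg (i : Fin n) : (G.neighborSet (σ i)).ncard = (G.neighborSet i).ncard := by
    have himage : G.neighborSet (σ i) = σ '' G.neighborSet i := by
      rw [Equiv.image_eq_preimage_symm]
      ext j
      simp [hσ i]
    rw [himage, Set.ncard_image_of_injective _ σ.injective]
  ext i j
  simp only [lap, Matrix.submatrix_apply, Matrix.of_apply, σ.injective.eq_iff, hdeg, ← hσ i j]

instance : Std.Symm (IsTwin G) :=
  ⟨fun _ _ h => ⟨h.1.symm, h.2.symm⟩⟩

lemma IsTwin.adj_iff_adj (h : IsTwin G u v) (hu : w ≠ u) (hv : w ≠ v) : G.Adj u w ↔ G.Adj v w := by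
  simpa [hu, hv] using Set.ext_iff.1 h.2 w

lemma IsTwin.isGraphAut_swap (h : IsTwin G u v) : IsGraphAut G (Equiv.swap u v) := by
  intro x y
  have hadj (w : Fin n) (hu : w ≠ u) (hv : w ≠ v) : G.Adj u w ↔ G.Adj v w :=
    h.adj_iff_adj hu hv
  grind [G.adj_comm, G.irrefl]

lemma HasSimpleSpectrum.rightUnique_isTwin (hM : HasSimpleSpectrum M)
    (hG : ∀ σ : Equiv.Perm (Fin n), IsGraphAut G σ → M.submatrix σ σ = M) :
    Relator.RightUnique (IsTwin G) := fun _ _ _ huv huw =>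
  eq_of_commute_swap_swap huv.1 huw.1 <|
    hM.commute_of_submatrix_eq (hG _ huv.isGraphAut_swap) (hG _ huw.isGraphAut_swap)

end Graph

theorem stmt2_general {n : ℕ} (G : SimpleGraph (Fin n)) {M : Matrix (Fin n) (Fin n) ℝ}
    (hM : HasSimpleSpectrum M)
    (hG : ∀ σ : Equiv.Perm (Fin n), IsGraphAut G σ → M.submatrix σ σ = M) :
    {p : Fin n × Fin n | p.1 < p.2 ∧ IsTwin G p.1 p.2}.ncard ≤ n / 2 := by
  have h := two_mul_ncard_setOf_lt_and_le_card (hM.rightUnique_isTwin hG)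
  rw [Fintype.card_fin] at h
  omega

theorem stmt2 {n : ℕ} (hn : Odd n) (G : SimpleGraph (Fin n))
    (hspec : HasSimpleSpectrum (lap G)) :
    {p : Fin n × Fin n | p.1 < p.2 ∧ IsTwin G p.1 p.2}.ncard ≤ (n - 1) / 2 := by
  have h := stmt2_general G hspec fun _ => IsGraphAut.submatrix_lap
  obtain ⟨k, rfl⟩ := hn
  omega
end

section
/- Let G be a connected twin graph on an even number n of vertices, with the t = n/2 − 1 pairwise disjoint twin pairs C_1,…,C_t and the two remaining (non-twin) vertices v_{n−1}, v_n, and let π* = {C_1,…,C_t,{v_{n−1}},{v_n}} be the twin partition of G. If the quotient Laplacian L_{π*} admits an almost equitable partition of the quotient graph of the form ρ = {S_1,…,S_m, {{v_{n−1}},{v_n}}}, where {S_1,…,S_m} is a partition of {C_1,…,C_t}, then G is strongly uncontrollable, i.e., (L(G), b) is uncontrollable for every b ∈ {0,1}^n. -/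
open Classical Matrix

/-!
The Laplacian `L` is symmetric, so if `U < V` are `L`-invariant subspaces and the orthogonal
projection of `b` onto `V` lies in `U`, then the Krylov space of `b` stays inside `U ⊔ Vᗮ ≠ ⊤`.
Every binary vector `b` falls into one of three cases.

* `b` agrees on some twin pair `{u, v}`: take `V = ⊤` and `U = {x | x u = x v}`.
* `b` splits every twin pair and agrees on the two remaining vertices: take for `V` and `U` the
  functions constant on the cells of `π*` and of the coarser partition that `ρ` induces. Averaged
  over the cells of `π*`, `b` is `1/2` on each pair, hence constant on the cells of `U`.
* `b` splits every twin pair and the two remaining vertices: every cell of the partition induced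
  by `ρ` has average `1/2`, so `V` can be the functions constant on those cells and `U` the
  constants.
-/

open Module.End (invtSubmodule)

section Orthogonal

variable {ι : Type*} [Fintype ι]

theorem orthogonalBilin_mem_invtSubmodule {M : Matrix ι ι ℝ} (hM : M.IsSymm)
    {V : Submodule ℝ (ι → ℝ)} (hV : V ∈ invtSubmodule M.mulVecLin) :
    V.orthogonalBilin (dotProductBilin ℝ ℝ) ∈ invtSubmodule M.mulVecLin := by
  intro y hy x hx
  have hadj : x ⬝ᵥ (M *ᵥ y) = (M *ᵥ x) ⬝ᵥ y := by
    rw [dotProduct_mulVec, ← mulVec_transpose, hM.eq]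
  exact hadj.trans (hy _ (hV hx))

theorem sup_orthogonalBilin_ne_top {U V : Submodule ℝ (ι → ℝ)} (hUV : U < V) :
    U ⊔ V.orthogonalBilin (dotProductBilin ℝ ℝ) ≠ ⊤ := by
  intro htop
  obtain ⟨z, hzV, hzU⟩ := SetLike.exists_of_lt hUV
  obtain ⟨q, hq, y, hy, rfl⟩ := Submodule.mem_sup.mp (htop ▸ Submodule.mem_top : z ∈ _)
  have hyV : y ∈ V := (V.add_mem_iff_right (hUV.le hq)).mp hzV
  have hy0 : y = 0 := dotProduct_self_eq_zero.mp (hy y hyV)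
  exact hzU (by simpa [hy0] using hq)

end Orthogonal

section Controllability

variable {n : ℕ} {M : Matrix (Fin n) (Fin n) ℝ} {b : Fin n → ℝ}

theorem not_controllable_of_mem_invtSubmodule {W : Submodule ℝ (Fin n → ℝ)}
    (hW : W ∈ invtSubmodule M.mulVecLin) (hb : b ∈ W) (hne : W ≠ ⊤) : ¬ Controllable M b := by
  intro hctrl
  have hkrylov (k : ℕ) : M ^ k *ᵥ b ∈ W := by
    induction k with
    | zero => simpa using hb
    | succ k ih =>
      rw [pow_succ', ← mulVec_mulVec]
      exact hW ih
  refine hne (top_le_iff.mp ?_)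
  rw [← hctrl, Submodule.span_le]
  rintro _ ⟨k, rfl⟩
  exact hkrylov k

theorem not_controllable_of_invtSubmodule_lt (hM : M.IsSymm) {U V : Submodule ℝ (Fin n → ℝ)}
    (hU : U ∈ invtSubmodule M.mulVecLin) (hV : V ∈ invtSubmodule M.mulVecLin) (hUV : U < V)
    {p : Fin n → ℝ} (hp : p ∈ U) (horth : ∀ x ∈ V, x ⬝ᵥ (b - p) = 0) : ¬ Controllable M b := by
  refine not_controllable_of_mem_invtSubmodule
    (invtSubmodule.sup_mem hU (orthogonalBilin_mem_invtSubmodule hM hV)) ?_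
    (sup_orthogonalBilin_ne_top hUV)
  exact Submodule.mem_sup.mpr ⟨p, hp, b - p, horth, add_sub_cancel p b⟩

end Controllability

section CellConst

variable {ι κ τ : Type*}

/-- The functions on `ι` that are constant on the cells (fibres) of `c`, that is, the column space
of the characteristic matrix of the partition encoded by the labelling `c`. Invariance of this
subspace under the Laplacian is how almost equitable partitions enter the proof. -/
def cellConst (c : ι → κ) : Submodule ℝ (ι → ℝ) :=
  LinearMap.range (LinearMap.funLeft ℝ ℝ c)

theorem comp_mem_cellConst (c : ι → κ) (h : κ → ℝ) : h ∘ c ∈ cellConst c :=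
  ⟨h, rfl⟩

theorem mem_cellConst_iff_factorsThrough {c : ι → κ} {x : ι → ℝ} :
    x ∈ cellConst c ↔ x.FactorsThrough c := by
  rw [Function.factorsThrough_iff]
  exact exists_congr fun _ => eq_comm

theorem cellConst_lt_cellConst {c : ι → κ} {s : ι → τ} (hs : s.FactorsThrough c) {i j : ι}
    (hsij : s i = s j) (hcij : c i ≠ c j) : cellConst s < cellConst c := by
  refine SetLike.lt_iff_le_and_exists.mpr
    ⟨?_, Pi.single (c i) 1 ∘ c, comp_mem_cellConst c _, fun hmem => ?_⟩
  · rintro _ ⟨g, rfl⟩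
    exact mem_cellConst_iff_factorsThrough.mpr fun x y hxy => congrArg g (hs hxy)
  · simpa [hcij.symm] using mem_cellConst_iff_factorsThrough.mp hmem hsij

theorem comp_dotProduct [Fintype ι] [Fintype κ] [DecidableEq κ] (c : ι → κ)
    (h : κ → ℝ) (d : ι → ℝ) : (h ∘ c) ⬝ᵥ d = ∑ C, h C * ∑ x with c x = C, d x := by
  rw [dotProduct, ← Finset.sum_fiberwise Finset.univ c]
  refine Finset.sum_congr rfl fun C _ => ?_
  rw [Finset.mul_sum]
  refine Finset.sum_congr rfl fun x hx => ?_
  rw [Function.comp_apply, (Finset.mem_filter.mp hx).2]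

end CellConst

theorem not_controllable_of_cellConst {n : ℕ} {κ τ : Type*} {M : Matrix (Fin n) (Fin n) ℝ}
    (hM : M.IsSymm) {b : Fin n → ℝ} {c : Fin n → κ} {s : Fin n → τ}
    (hc : cellConst c ∈ invtSubmodule M.mulVecLin) (hs : cellConst s ∈ invtSubmodule M.mulVecLin)
    (hsc : s.FactorsThrough c) {i j : Fin n} (hsij : s i = s j) (hcij : c i ≠ c j) {p : τ → ℝ}
    (horth : ∀ h : κ → ℝ, (h ∘ c) ⬝ᵥ (b - p ∘ s) = 0) : ¬ Controllable M b := by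
  refine not_controllable_of_invtSubmodule_lt hM hs hc (cellConst_lt_cellConst hsc hsij hcij)
    (comp_mem_cellConst s p) ?_
  rintro _ ⟨h, rfl⟩
  exact horth h

section Laplacian

variable {n : ℕ} (G : SimpleGraph (Fin n))

theorem lap_eq_lapMatrix : lap G = G.lapMatrix ℝ := by
  ext i j
  have hdeg : (G.neighborSet i).ncard = G.degree i := Set.ncard_eq_toFinset_card' _
  simp [lap, SimpleGraph.lapMatrix, SimpleGraph.degMatrix, diagonal_apply, hdeg]

theorem lap_isSymm : (lap G).IsSymm :=
  lap_eq_lapMatrix G ▸ G.isSymm_lapMatrix ℝ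

theorem lap_mulVec_one : lap G *ᵥ 1 = 0 :=
  lap_eq_lapMatrix G ▸ G.lapMatrix_mulVec_const_eq_zero

theorem lap_mulVec_apply (x : Fin n → ℝ) (i : Fin n) :
    (lap G *ᵥ x) i = ∑ j, if G.Adj i j then x i - x j else 0 := by
  rw [lap_eq_lapMatrix, SimpleGraph.lapMatrix_mulVec_apply, ← Finset.sum_filter,
    Finset.sum_sub_distrib, Finset.sum_const, ← SimpleGraph.neighborFinset_eq_filter,
    SimpleGraph.card_neighborFinset_eq_degree, nsmul_eq_mul]

theorem cellConst_const_mem_invtSubmodule :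
    cellConst (fun _ : Fin n => ()) ∈ invtSubmodule (lap G).mulVecLin := by
  rintro _ ⟨h, rfl⟩
  have hconst : LinearMap.funLeft ℝ ℝ (fun _ : Fin n => ()) h = h () • 1 := by
    ext
    simp [LinearMap.funLeft_apply]
  simp [hconst, lap_mulVec_one]

end Laplacian

section Twins

variable {n : ℕ} {G : SimpleGraph (Fin n)} {u v : Fin n}

theorem IsTwin.adj_iff (h : IsTwin G u v) {w : Fin n} (hu : w ≠ u) (hv : w ≠ v) :
    G.Adj u w ↔ G.Adj v w := by
  simpa [hu, hv] using Set.ext_iff.mp h.2 w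

theorem IsTwin.lap_mulVec_eq (h : IsTwin G u v) {x : Fin n → ℝ} (hx : x u = x v) :
    (lap G *ᵥ x) u = (lap G *ᵥ x) v := by
  rw [lap_mulVec_apply, lap_mulVec_apply]
  refine Finset.sum_congr rfl fun w _ => ?_
  obtain rfl | hu := eq_or_ne w u
  · simp [hx]
  obtain rfl | hv := eq_or_ne w v
  · simp [hx]
  simp only [h.adj_iff hu hv, hx]

theorem IsTwin.not_controllable (h : IsTwin G u v) {b : Fin n → ℝ} (hb : b u = b v) :
    ¬ Controllable (lap G) b := by
  let U : Submodule ℝ (Fin n → ℝ) := LinearMap.eqLocus (LinearMap.proj u) (LinearMap.proj v)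
  have hinv : U ∈ invtSubmodule (lap G).mulVecLin := fun _ hx => h.lap_mulVec_eq hx
  have hU : U ≠ ⊤ := by
    intro htop
    have hmem : Pi.single u 1 ∈ U := htop ▸ Submodule.mem_top
    simp [U, h.1.symm] at hmem
  exact not_controllable_of_mem_invtSubmodule hinv hb hU

end Twins

section Quotient

variable {n k m : ℕ}

theorem Pmat_mulVec (c : Fin n → Fin k) (h : Fin k → ℝ) : Pmat c *ᵥ h = h ∘ c := by
  ext i
  simp [Pmat, mulVec, dotProduct]

theorem Pmat_transpose_mul_Pmat (c : Fin n → Fin k) :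
    (Pmat c)ᵀ * Pmat c = diagonal fun C => (Finset.card {x | c x = C} : ℝ) := by
  ext C C'
  simp only [mul_apply, transpose_apply, Pmat, of_apply, diagonal_apply]
  split_ifs with hCC'
  · simp [← hCC', ← ite_and]
  · refine Finset.sum_eq_zero fun x _ => ?_
    grind

theorem isUnit_det_Pmat_transpose_mul_Pmat {c : Fin n → Fin k} (hc : Function.Surjective c) :
    IsUnit ((Pmat c)ᵀ * Pmat c).det := by
  rw [Pmat_transpose_mul_Pmat, det_diagonal, isUnit_iff_ne_zero, Finset.prod_ne_zero_iff]
  intro C _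
  obtain ⟨x, hx⟩ := hc C
  exact Nat.cast_ne_zero.mpr (Finset.card_ne_zero_of_mem (a := x) (by simpa using hx))

variable {G : SimpleGraph (Fin n)} {c : Fin n → Fin k}

-- `P (Pᵀ P)⁻¹ Pᵀ` is the projection onto the column space of `P`, so it fixes `L P h`.
theorem lap_mulVec_comp (hc : Function.Surjective c)
    (hinv : cellConst c ∈ invtSubmodule (lap G).mulVecLin) (h : Fin k → ℝ) :
    lap G *ᵥ (h ∘ c) = (quotLap G c *ᵥ h) ∘ c := by
  obtain ⟨g, hg⟩ : ∃ g : Fin k → ℝ, g ∘ c = lap G *ᵥ (h ∘ c) := hinv (comp_mem_cellConst c h)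
  have hquot : quotLap G c *ᵥ h = g := by
    simp only [quotLap, ← mulVec_mulVec, Pmat_mulVec, ← hg]
    rw [← Pmat_mulVec, mulVec_mulVec, mulVec_mulVec, Matrix.mul_assoc,
      nonsing_inv_mul _ (isUnit_det_Pmat_transpose_mul_Pmat hc), one_mulVec]
  rw [hquot, hg]

theorem quotLap_mulVec_one (hc : Function.Surjective c)
    (hinv : cellConst c ∈ invtSubmodule (lap G).mulVecLin) : quotLap G c *ᵥ 1 = 0 := by
  refine hc.injective_comp_right ?_
  calc (quotLap G c *ᵥ 1) ∘ c = lap G *ᵥ ((1 : Fin k → ℝ) ∘ c) := (lap_mulVec_comp hc hinv 1).symm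
    _ = (0 : Fin k → ℝ) ∘ c := lap_mulVec_one G

-- Vanishing row sums make the block sum of a cell with itself, on which an almost equitable
-- partition imposes no condition, drop out.
theorem IsQuotAEP.cellConst_mem_invtSubmodule {Lq : Matrix (Fin k) (Fin k) ℝ} {r : Fin k → Fin m}
    (hr : IsQuotAEP Lq r) (hone : Lq *ᵥ 1 = 0) : cellConst r ∈ invtSubmodule Lq.mulVecLin := by
  rintro _ ⟨h, rfl⟩
  have hblocks (C : Fin k) :
      (Lq *ᵥ (h ∘ r)) C = ∑ j, (h j - h (r C)) * ∑ C' with r C' = j, Lq C C' := by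
    calc (Lq *ᵥ (h ∘ r)) C = (Lq *ᵥ (h ∘ r - h (r C) • 1)) C := by
          rw [mulVec_sub, mulVec_smul, hone, smul_zero, sub_zero]
      _ = ((fun j => h j - h (r C)) ∘ r) ⬝ᵥ Lq C := by
          rw [mulVec, dotProduct_comm]
          congr 1
          ext
          simp
      _ = _ := comp_dotProduct r _ _
  refine mem_cellConst_iff_factorsThrough.mpr fun C C' hCC' => ?_
  change (Lq *ᵥ (h ∘ r)) C = (Lq *ᵥ (h ∘ r)) C'
  rw [hblocks, hblocks, hCC']
  refine Finset.sum_congr rfl fun j _ => ?_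
  obtain rfl | hj := eq_or_ne (r C') j
  · simp
  · rw [hr _ j hj C C' hCC' rfl]

theorem IsQuotAEP.cellConst_comp_mem_invtSubmodule {r : Fin k → Fin m}
    (hr : IsQuotAEP (quotLap G c) r) (hc : Function.Surjective c)
    (hinv : cellConst c ∈ invtSubmodule (lap G).mulVecLin) :
    cellConst (r ∘ c) ∈ invtSubmodule (lap G).mulVecLin := by
  rintro _ ⟨g, rfl⟩
  obtain ⟨g', hg'⟩ : ∃ g' : Fin m → ℝ, g' ∘ r = quotLap G c *ᵥ (g ∘ r) :=
    hr.cellConst_mem_invtSubmodule (quotLap_mulVec_one hc hinv) (comp_mem_cellConst r g)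
  refine ⟨g', ?_⟩
  calc g' ∘ r ∘ c = (quotLap G c *ᵥ (g ∘ r)) ∘ c := congrArg (· ∘ c) hg'
    _ = lap G *ᵥ (g ∘ r ∘ c) := (lap_mulVec_comp hc hinv (g ∘ r)).symm

end Quotient

/-- The labelling `c` encodes the twin partition `π*` of `G`: the twin pairs `{u i, v i}` have the
labels `0, …, t - 1`, and the singletons `{a}` and `{b}` the labels `t` and `t + 1`. -/
structure IsTwinPartition {t n : ℕ} (G : SimpleGraph (Fin n)) (u v : Fin t → Fin n) (a b : Fin n)
    (c : Fin n → Fin (t + 2)) : Prop where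
  isTwin (i : Fin t) : IsTwin G (u i) (v i)
  eq_pair_iff (i : Fin t) (x : Fin n) : c x = i.castSucc.castSucc ↔ x = u i ∨ x = v i
  eq_a_iff (x : Fin n) : c x = (Fin.last t).castSucc ↔ x = a
  eq_b_iff (x : Fin n) : c x = Fin.last (t + 1) ↔ x = b

namespace IsTwinPartition

variable {t n m : ℕ} {G : SimpleGraph (Fin n)} {u v : Fin t → Fin n} {a b : Fin n}
  {c : Fin n → Fin (t + 2)}

theorem apply_u (hπ : IsTwinPartition G u v a b c) (i : Fin t) : c (u i) = i.castSucc.castSucc :=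
  (hπ.eq_pair_iff i _).mpr (Or.inl rfl)

theorem apply_v (hπ : IsTwinPartition G u v a b c) (i : Fin t) : c (v i) = i.castSucc.castSucc :=
  (hπ.eq_pair_iff i _).mpr (Or.inr rfl)

theorem apply_a (hπ : IsTwinPartition G u v a b c) : c a = (Fin.last t).castSucc :=
  (hπ.eq_a_iff a).mpr rfl

theorem apply_b (hπ : IsTwinPartition G u v a b c) : c b = Fin.last (t + 1) :=
  (hπ.eq_b_iff b).mpr rfl

theorem apply_a_ne_apply_b (hπ : IsTwinPartition G u v a b c) : c a ≠ c b := by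
  rw [hπ.apply_a, hπ.apply_b]
  exact Fin.castSucc_ne_last _

theorem surjective (hπ : IsTwinPartition G u v a b c) : Function.Surjective c := by
  intro C
  cases C using Fin.lastCases with
  | last => exact ⟨b, hπ.apply_b⟩
  | cast C =>
    cases C using Fin.lastCases with
    | last => exact ⟨a, hπ.apply_a⟩
    | cast i => exact ⟨u i, hπ.apply_u i⟩

theorem exists_pair_or_eq_a_or_eq_b (hπ : IsTwinPartition G u v a b c) (x : Fin n) :
    (∃ i, x = u i ∨ x = v i) ∨ x = a ∨ x = b := by
  cases hC : c x using Fin.lastCases with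
  | last => exact Or.inr (Or.inr ((hπ.eq_b_iff x).mp hC))
  | cast C =>
    cases C using Fin.lastCases with
    | last => exact Or.inr (Or.inl ((hπ.eq_a_iff x).mp hC))
    | cast i => exact Or.inl ⟨i, (hπ.eq_pair_iff i x).mp hC⟩

theorem isTwin_of_isEmpty [IsEmpty (Fin t)] (hπ : IsTwinPartition G u v a b c) :
    IsTwin G a b := by
  refine ⟨fun hab => hπ.apply_a_ne_apply_b (congrArg c hab), ?_⟩
  ext x
  have hx : x = a ∨ x = b := (hπ.exists_pair_or_eq_a_or_eq_b x).resolve_left (by simp)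
  obtain rfl | rfl := hx <;> simp

theorem cellConst_mem_invtSubmodule (hπ : IsTwinPartition G u v a b c) :
    cellConst c ∈ invtSubmodule (lap G).mulVecLin := by
  intro x hx
  rw [mem_cellConst_iff_factorsThrough] at hx
  refine mem_cellConst_iff_factorsThrough.mpr fun y z hyz => ?_
  have hpair (i : Fin t) : (lap G *ᵥ x) (u i) = (lap G *ᵥ x) (v i) :=
    (hπ.isTwin i).lap_mulVec_eq (hx ((hπ.apply_u i).trans (hπ.apply_v i).symm))
  change (lap G *ᵥ x) y = (lap G *ᵥ x) z
  obtain ⟨i, hz⟩ | rfl | rfl := hπ.exists_pair_or_eq_a_or_eq_b z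
  · have hy : y = u i ∨ y = v i :=
      (hπ.eq_pair_iff i y).mp (hyz.trans ((hπ.eq_pair_iff i z).mpr hz))
    obtain rfl | rfl := hy <;> obtain rfl | rfl := hz <;> simp only [hpair]
  · rw [(hπ.eq_a_iff y).mp (hyz.trans hπ.apply_a)]
  · rw [(hπ.eq_b_iff y).mp (hyz.trans hπ.apply_b)]

theorem comp_dotProduct (hπ : IsTwinPartition G u v a b c) {d : Fin n → ℝ}
    (hd : ∀ i, d (u i) + d (v i) = 0) (h : Fin (t + 2) → ℝ) :
    (h ∘ c) ⬝ᵥ d = h (c a) * d a + h (c b) * d b := by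
  have hpair (i : Fin t) : ∑ x with c x = i.castSucc.castSucc, d x = 0 := by
    have hcell : ({x | c x = i.castSucc.castSucc} : Finset (Fin n)) = {u i, v i} := by
      ext x
      simp [hπ.eq_pair_iff]
    rw [hcell, Finset.sum_pair (hπ.isTwin i).1, hd]
  rw [_root_.comp_dotProduct, Fin.sum_univ_castSucc, Fin.sum_univ_castSucc, hπ.apply_a,
    hπ.apply_b]
  simp [hpair, hπ.eq_a_iff, hπ.eq_b_iff, Finset.filter_eq']

theorem not_controllable_of_eq (hπ : IsTwinPartition G u v a b c) {r : Fin (t + 2) → Fin m}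
    (hr : cellConst (r ∘ c) ∈ invtSubmodule (lap G).mulVecLin) (hrab : r (c a) = r (c b))
    (hpair : ∀ i, r (c (u i)) ≠ r (c b)) {w : Fin n → ℝ} (hw : ∀ i, w (u i) + w (v i) = 1)
    (hwab : w a = w b) : ¬ Controllable (lap G) w := by
  let p : Fin m → ℝ := fun j => if j = r (c b) then w b else 1 / 2
  have hpb : p (r (c b)) = w b := if_pos rfl
  have hpu (i : Fin t) : p (r (c (u i))) = 1 / 2 := if_neg (hpair i)
  have huv (i : Fin t) : c (v i) = c (u i) := (hπ.apply_v i).trans (hπ.apply_u i).symm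
  refine not_controllable_of_cellConst (lap_isSymm G) hπ.cellConst_mem_invtSubmodule hr
    (fun x y hxy => congrArg r hxy) hrab hπ.apply_a_ne_apply_b (p := p) fun h => ?_
  rw [hπ.comp_dotProduct]
  · simp [hrab, hpb, hwab]
  · intro i
    simp only [Pi.sub_apply, Function.comp_apply, huv, hpu]
    linear_combination hw i

theorem not_controllable_of_add_eq_one (hπ : IsTwinPartition G u v a b c)
    {r : Fin (t + 2) → Fin m} (hr : cellConst (r ∘ c) ∈ invtSubmodule (lap G).mulVecLin)
    (hrab : r (c a) = r (c b)) {i : Fin t} (hi : r (c (u i)) ≠ r (c b)) {w : Fin n → ℝ}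
    (hw : ∀ i, w (u i) + w (v i) = 1) (hwab : w a + w b = 1) : ¬ Controllable (lap G) w := by
  refine not_controllable_of_cellConst (lap_isSymm G) hr (cellConst_const_mem_invtSubmodule G)
    (fun _ _ _ => rfl) rfl hi (p := fun _ => 1 / 2) fun h => ?_
  rw [← Function.comp_assoc, hπ.comp_dotProduct]
  · simp only [Function.comp_apply, Pi.sub_apply, hrab]
    linear_combination h (r (c b)) * hwab
  · intro i
    simp only [Pi.sub_apply, Function.comp_apply]
    linear_combination hw i

end IsTwinPartition

theorem add_eq_one_of_ne {x y : ℝ} (hx : x = 0 ∨ x = 1) (hy : y = 0 ∨ y = 1) (hxy : x ≠ y) :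
    x + y = 1 := by
  grind

theorem stmt4 {t n : ℕ} (hn : n = 2 * t + 2)
    (G : SimpleGraph (Fin n)) (hconn : G.Connected)
    (hspec : HasSimpleSpectrum (lap G))
    (u v : Fin t → Fin n) (a b : Fin n)
    (htwin : ∀ i, IsTwin G (u i) (v i))
    (hna : ∀ w, ¬ IsTwin G a w) (hnb : ∀ w, ¬ IsTwin G b w)
    (c : Fin n → Fin (t + 2))
    (hc : ∀ (i : Fin t) (x : Fin n), c x = Fin.castLE (by omega) i ↔ (x = u i ∨ x = v i))
    (hca : ∀ x, c x = ⟨t, by omega⟩ ↔ x = a)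
    (hcb : ∀ x, c x = ⟨t + 1, by omega⟩ ↔ x = b)
    {m : ℕ} (r : Fin (t + 2) → Fin (m + 1))
    (hrsurj : Function.Surjective r)
    (hrlast : ∀ j : Fin (t + 2), r j = Fin.last m ↔ ((j : ℕ) = t ∨ (j : ℕ) = t + 1))
    (hρ : IsQuotAEP (quotLap G c) r) :
    StronglyUncontrollable G := by
  have hπ : IsTwinPartition G u v a b c := ⟨htwin, hc, hca, hcb⟩
  have hr := hρ.cellConst_comp_mem_invtSubmodule hπ.surjective hπ.cellConst_mem_invtSubmodule
  have hra : r (c a) = Fin.last m := (hrlast _).mpr (Or.inl (by simp [hπ.apply_a]))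
  have hrb : r (c b) = Fin.last m := (hrlast _).mpr (Or.inr (by simp [hπ.apply_b]))
  have hrab : r (c a) = r (c b) := hra.trans hrb.symm
  have hpair (i : Fin t) : r (c (u i)) ≠ r (c b) := by
    rw [hrb, Ne, hrlast, hπ.apply_u, Fin.val_castSucc, Fin.val_castSucc]
    omega
  refine ⟨hconn, hspec, fun w hw => ?_⟩
  by_cases htie : ∃ i, w (u i) = w (v i)
  · obtain ⟨i, hi⟩ := htie
    exact (htwin i).not_controllable hi
  push Not at htie
  have hsplit (i : Fin t) : w (u i) + w (v i) = 1 := add_eq_one_of_ne (hw _) (hw _) (htie i)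
  by_cases hwab : w a = w b
  · exact hπ.not_controllable_of_eq hr hrab hpair hsplit hwab
  · obtain ht | ⟨⟨i⟩⟩ := isEmpty_or_nonempty (Fin t)
    · exact absurd hπ.isTwin_of_isEmpty (hna b)
    · exact hπ.not_controllable_of_add_eq_one hr hrab (hpair i) hsplit
        (add_eq_one_of_ne (hw a) (hw b) hwab)
end

section
/- Let G be a strongly uncontrollable graph on vertex set {1,…,n} such that neither n − 2 nor n is an eigenvalue of L(G), and let G̃ be the graph on {1,…,n+2} obtained from G by adding the two new vertices n+1 and n+2, non-adjacent to each other, each adjacent to every vertex of G. Then a permutation σ of {1,…,n+2} is an automorphism of G̃ if and only if σ({n+1, n+2}) = {n+1, n+2} and the restriction of σ to {1,…,n} is an automorphism of G; equivalently, Aut(G̃) is generated by the extensions of the automorphisms of G (fixing n+1 and n+2) together with the transposition (n+1 n+2). -/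
open Classical Matrix

/-!
The two added vertices form an isolated edge of the complement of `joinTwo G`, and graph
isomorphisms preserve isolated edges of the complement. In `joinTwo G` such a pair either is the
pair of added vertices or already lies in `G`. In the second case its endpoints are non-adjacent
vertices of `G` with the same neighbourhood, of degree `n - 2`, so the difference of their indicator
vectors is an eigenvector of the Laplacian for `n - 2`. If `n - 2` is not an eigenvalue, an
automorphism must therefore map the added pair to itself.
-/

section Perm

variable {α β : Type*} {f : α → β} {σ : Equiv.Perm β}

lemma perm_apply_mem_iff_of_image_eq {s : Set β} (h : σ '' s = s) (y : β) : σ y ∈ s ↔ y ∈ s := by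
  conv_lhs => rw [← h, σ.injective.mem_set_image]

lemma image_range_eq_of_perm_semiconj {τ : Equiv.Perm α} (h : ∀ x, σ (f x) = f (τ x)) :
    σ '' Set.range f = Set.range f := by
  rw [← Set.range_comp, show σ ∘ f = f ∘ τ from funext h, τ.surjective.range_comp]

lemma exists_perm_semiconj_of_image_range_eq (hf : f.Injective)
    (h : σ '' Set.range f = Set.range f) :
    ∃ τ : Equiv.Perm α, ∀ x, σ (f x) = f (τ x) := by
  let e := Equiv.ofInjective f hf
  refine ⟨e.symm.permCongr (σ.subtypePerm (perm_apply_mem_iff_of_image_eq h)), fun x => ?_⟩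
  simp [e, Equiv.apply_ofInjective_symm]

end Perm

section Laplacian

variable {V : Type*} [Fintype V] [DecidableEq V] {G : SimpleGraph V} [DecidableRel G.Adj]

lemma lapMatrix_mulVec_single_sub_single (R : Type*) [NonAssocRing R] {u w : V}
    (h : G.neighborSet u = G.neighborSet w) :
    G.lapMatrix R *ᵥ (Pi.single u 1 - Pi.single w 1) =
      (G.degree u : R) • (Pi.single u 1 - Pi.single w 1) := by
  have adj_iff (v : V) : G.Adj v u ↔ G.Adj v w := by
    rw [G.adj_comm v u, G.adj_comm v w, ← G.mem_neighborSet, h, G.mem_neighborSet]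
  have degree_eq : G.degree u = G.degree w := by
    simp only [← G.card_neighborSet_eq_degree, h]
  have adjMatrix_mulVec_eq_zero : G.adjMatrix R *ᵥ (Pi.single u 1 - Pi.single w 1) = 0 := by
    ext v
    simp [adj_iff]
  rw [SimpleGraph.lapMatrix, Matrix.sub_mulVec, adjMatrix_mulVec_eq_zero, sub_zero]
  ext v
  rw [SimpleGraph.degMatrix_mulVec_apply, Pi.smul_apply, smul_eq_mul]
  rcases eq_or_ne v u with rfl | hvu
  · rfl
  rcases eq_or_ne v w with rfl | hvw
  · rw [degree_eq]
  · simp [hvu, hvw]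

lemma lap_eq_lapMatrix_s9 {n : ℕ} (G : SimpleGraph (Fin n)) [DecidableRel G.Adj] :
    lap G = G.lapMatrix ℝ := by
  have ncard_neighborSet (i : Fin n) : (G.neighborSet i).ncard = G.degree i := by
    rw [← Nat.card_coe_set_eq, Nat.card_eq_fintype_card, G.card_neighborSet_eq_degree]
  ext i j
  simp only [lap, ncard_neighborSet, SimpleGraph.lapMatrix, SimpleGraph.degMatrix,
    Matrix.diagonal_apply, SimpleGraph.adjMatrix_apply, Matrix.of_apply, Matrix.sub_apply]
  congr

end Laplacian

/-- The edge `uw` of the complement of `G` is isolated there: `u` and `w` are distinct, and the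
vertices adjacent in `G` to either of them are exactly those outside `{u, w}`. It is the property by
which automorphisms of `joinTwo G` recognise the added vertices. -/
structure IsIsolatedCoedge {V : Type*} (G : SimpleGraph V) (u w : V) : Prop where
  ne : u ≠ w
  neighborSet_left : G.neighborSet u = {u, w}ᶜ
  neighborSet_right : G.neighborSet w = {u, w}ᶜ

namespace IsIsolatedCoedge

variable {V W : Type*} {G : SimpleGraph V} {H : SimpleGraph W} {u w : V}

lemma comap (f : G ↪g H) (h : IsIsolatedCoedge H (f u) (f w)) : IsIsolatedCoedge G u w := by
  have preimage_compl_pair : f ⁻¹' {f u, f w}ᶜ = {u, w}ᶜ := by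
    rw [Set.preimage_compl, ← Set.image_pair, f.injective.preimage_image]
  refine ⟨ne_of_apply_ne f h.ne, ?_, ?_⟩
  · rw [← f.preimage_neighborSet, h.neighborSet_left, preimage_compl_pair]
  · rw [← f.preimage_neighborSet, h.neighborSet_right, preimage_compl_pair]

lemma map (e : G ≃g H) (h : IsIsolatedCoedge G u w) : IsIsolatedCoedge H (e u) (e w) :=
  comap e.symm.toEmbedding (by simpa using h)

lemma not_adj (h : IsIsolatedCoedge G u w) : ¬ G.Adj u w := by
  simp [← G.mem_neighborSet, h.neighborSet_left]

lemma degree_add_two [Fintype V] [DecidableRel G.Adj] (h : IsIsolatedCoedge G u w) :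
    G.degree u + 2 = Fintype.card V := by
  rw [← G.card_neighborSet_eq_degree, ← Nat.card_eq_fintype_card, h.neighborSet_left,
    Nat.card_coe_set_eq, ← Set.ncard_pair h.ne, add_comm, Set.ncard_add_ncard_compl,
    Nat.card_eq_fintype_card]

lemma isEigenvalue_lap {n : ℕ} {G : SimpleGraph (Fin n)} {u w : Fin n}
    (h : IsIsolatedCoedge G u w) : IsEigenvalue (lap G) ((n : ℝ) - 2) := by
  have degree_eq : (G.degree u : ℝ) = n - 2 := by
    rw [eq_sub_iff_add_eq]
    exact_mod_cast h.degree_add_two.trans (Fintype.card_fin n)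
  refine ⟨Pi.single u 1 - Pi.single w 1, fun h_zero => ?_, ?_⟩
  · simpa [h.ne] using congrFun h_zero u
  · rw [lap_eq_lapMatrix_s9, ← degree_eq]
    exact lapMatrix_mulVec_single_sub_single ℝ (h.neighborSet_left.trans h.neighborSet_right.symm)

end IsIsolatedCoedge

section JoinTwo

variable {n : ℕ}

lemma compl_range_castAdd_two :
    (Set.range (Fin.castAdd 2 : Fin n → Fin (n + 2)))ᶜ = {Fin.natAdd n 0, Fin.natAdd n 1} := by
  rw [Fin.range_castAdd]
  ext v
  simp only [Set.mem_compl_iff, Set.mem_Iio, Fin.lt_def, Set.mem_insert_iff,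
    Set.mem_singleton_iff, Fin.ext_iff, Fin.val_natAdd, Fin.val_zero, Fin.val_one]
  omega

variable {G : SimpleGraph (Fin n)}

/-- The inclusion of `G` into `joinTwo G` as the induced subgraph on the old vertices. -/
def joinTwoEmbedding (G : SimpleGraph (Fin n)) : G ↪g joinTwo G where
  toEmbedding := Fin.castAddEmb 2
  map_rel_iff' {x y} := by
    simp only [joinTwo, Fin.castAddEmb_apply, Fin.val_castAdd, Fin.is_lt, Fin.eta, true_and,
      Nat.not_le.mpr, false_or, exists_true_left, and_iff_right_iff_imp]
    exact fun h => (Fin.castAdd_injective n 2).ne h.ne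

lemma joinTwo_adj_iff_mem_range {v w : Fin (n + 2)} (hv : v ∉ Set.range (Fin.castAdd 2)) :
    (joinTwo G).Adj v w ↔ w ∈ Set.range (Fin.castAdd 2) := by
  rw [Fin.range_castAdd, Set.mem_Iio, Fin.lt_def] at hv ⊢
  simp only [joinTwo, Fin.val_natAdd, Fin.val_zero, ne_eq, Fin.ext_iff] at hv ⊢
  grind

lemma neighborSet_joinTwo_of_notMem_range {v : Fin (n + 2)} (hv : v ∉ Set.range (Fin.castAdd 2)) :
    (joinTwo G).neighborSet v = Set.range (Fin.castAdd 2) :=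
  Set.ext fun _ => joinTwo_adj_iff_mem_range hv

lemma isIsolatedCoedge_joinTwo :
    IsIsolatedCoedge (joinTwo G) (Fin.natAdd n 0) (Fin.natAdd n 1) where
  ne := by simp
  neighborSet_left := by
    rw [neighborSet_joinTwo_of_notMem_range (by simp), ← compl_range_castAdd_two, compl_compl]
  neighborSet_right := by
    rw [neighborSet_joinTwo_of_notMem_range (by simp), ← compl_range_castAdd_two, compl_compl]

lemma IsIsolatedCoedge.pair_eq_of_joinTwo {v w : Fin (n + 2)}
    (h : IsIsolatedCoedge (joinTwo G) v w) (hG : ∀ x y, ¬ IsIsolatedCoedge G x y) :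
    ({v, w} : Set (Fin (n + 2))) = {Fin.natAdd n 0, Fin.natAdd n 1} := by
  have hv : v ∉ Set.range (Fin.castAdd 2) := by
    rintro ⟨x, rfl⟩
    have hw : w ∈ Set.range (Fin.castAdd 2) := by
      by_contra hw
      exact h.not_adj ((joinTwo_adj_iff_mem_range hw).mpr ⟨x, rfl⟩).symm
    obtain ⟨y, rfl⟩ := hw
    exact hG x y (h.comap (joinTwoEmbedding G))
  rw [← compl_range_castAdd_two, ← neighborSet_joinTwo_of_notMem_range hv, h.neighborSet_left,
    compl_compl]

lemma isGraphAut_joinTwo_iff {σ : Equiv.Perm (Fin (n + 2))} {τ : Equiv.Perm (Fin n)}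
    (h : ∀ x, σ (Fin.castAdd 2 x) = Fin.castAdd 2 (τ x)) :
    IsGraphAut (joinTwo G) σ ↔ IsGraphAut G τ := by
  have adj_castAdd (x y : Fin n) :
      (joinTwo G).Adj (Fin.castAdd 2 x) (Fin.castAdd 2 y) ↔ G.Adj x y :=
    (joinTwoEmbedding G).map_adj_iff
  have mem_range_iff (v : Fin (n + 2)) :
      σ v ∈ Set.range (Fin.castAdd 2) ↔ v ∈ Set.range (Fin.castAdd 2) :=
    perm_apply_mem_iff_of_image_eq (image_range_eq_of_perm_semiconj h) v
  constructor
  · intro hσ x y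
    rw [← adj_castAdd, hσ, h, h, adj_castAdd]
  · intro hτ v w
    by_cases hv : v ∈ Set.range (Fin.castAdd 2)
    · by_cases hw : w ∈ Set.range (Fin.castAdd 2)
      · obtain ⟨x, rfl⟩ := hv
        obtain ⟨y, rfl⟩ := hw
        rw [h, h, adj_castAdd, adj_castAdd]
        exact hτ x y
      · rw [SimpleGraph.adj_comm, joinTwo_adj_iff_mem_range hw, SimpleGraph.adj_comm,
          joinTwo_adj_iff_mem_range (by rwa [mem_range_iff]), mem_range_iff]
    · rw [joinTwo_adj_iff_mem_range hv, joinTwo_adj_iff_mem_range (by rwa [mem_range_iff]),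
        mem_range_iff]

end JoinTwo

theorem stmt9_general {n : ℕ} (G : SimpleGraph (Fin n)) (hG : ∀ u w, ¬ IsIsolatedCoedge G u w)
    (σ : Equiv.Perm (Fin (n + 2))) :
    IsGraphAut (joinTwo G) σ ↔
      ({σ (Fin.natAdd n 0), σ (Fin.natAdd n 1)} : Set (Fin (n + 2))) =
          {Fin.natAdd n 0, Fin.natAdd n 1} ∧
        ∃ τ : Equiv.Perm (Fin n), IsGraphAut G τ ∧
          ∀ x, σ (Fin.castAdd 2 x) = Fin.castAdd 2 (τ x) := by
  constructor
  · intro hσ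
    let e : joinTwo G ≃g joinTwo G := ⟨σ, (hσ _ _).symm⟩
    have pair_eq : ({σ (Fin.natAdd n 0), σ (Fin.natAdd n 1)} : Set (Fin (n + 2))) =
        {Fin.natAdd n 0, Fin.natAdd n 1} :=
      (isIsolatedCoedge_joinTwo.map e).pair_eq_of_joinTwo hG
    have image_range : σ '' Set.range (Fin.castAdd 2) = Set.range (Fin.castAdd 2) := by
      rw [← compl_inj_iff, ← Set.image_compl_eq σ.bijective, compl_range_castAdd_two,
        Set.image_pair, pair_eq]
    obtain ⟨τ, hτ⟩ :=
      exists_perm_semiconj_of_image_range_eq (Fin.castAdd_injective n 2) image_range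
    exact ⟨pair_eq, τ, (isGraphAut_joinTwo_iff hτ).mp hσ, hτ⟩
  · rintro ⟨-, τ, hτ, h⟩
    exact (isGraphAut_joinTwo_iff h).mpr hτ

theorem stmt9 {n : ℕ} (G : SimpleGraph (Fin n)) (hG : StronglyUncontrollable G)
    (h2 : ¬ IsEigenvalue (lap G) ((n : ℝ) - 2)) (h0 : ¬ IsEigenvalue (lap G) (n : ℝ))
    (σ : Equiv.Perm (Fin (n + 2))) :
    IsGraphAut (joinTwo G) σ ↔
      (({σ ⟨n, by omega⟩, σ ⟨n + 1, by omega⟩} : Set (Fin (n + 2))) =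
          {⟨n, by omega⟩, ⟨n + 1, by omega⟩} ∧
        ∃ τ : Equiv.Perm (Fin n), IsGraphAut G τ ∧
          ∀ x : Fin n, σ (Fin.castLE (by omega) x) = Fin.castLE (by omega) (τ x)) :=
  stmt9_general G (fun _ _ h => h2 h.isEigenvalue_lap) σ
end
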